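/- Let Ω be a compact Hausdorff space and let H be a complex Hilbert space. Then every 2-local derivation Δ : C(Ω,B(H)) → C(Ω,B(H)) is linear and a derivation. -/

import Mathlib

/-- A (complex-linear) derivation on a complex normed algebra. -/
def IsCDerivation {B : Type*} [NonUnitalNormedRing B] [NormedSpace ℂ B] (D : B → B) : Prop :=
  (∀ x y : B, D (x + y) = D x + D y) ∧ (∀ (c : ℂ) (x : B), D (c • x) = c • D x) ∧
  (∀ x y : B, D (x * y) = D x * y + x * D y)

def Is2LocalDerivation {B : Type*} [NonUnitalNormedRing B] [NormedSpace ℂ B]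
    (Δ : B → B) : Prop :=
  ∀ x y : B, ∃ D : B → B, IsCDerivation D ∧ Δ x = D x ∧ Δ y = D y

/-!
A derivation `D` of `C(Ω, A)` acts fibrewise: a function vanishing at `t` is a product of two
functions vanishing at `t`, so `D a t` depends only on `a t`. This reduces the theorem to a
2-local derivation `Δ` of the algebra of bounded operators on a normed space.

Additivity: for a rank-one operator `e` every `e x e` is a scalar multiple of `e`, so the Leibniz
rule for `e x e` expresses `e Δ(x) e` through `Δ(e)` in a way that is additive in `x`, and these
compressions determine `Δ(x)`.

Leibniz rule: if `a x = 0 = x b` then `a Δ(x) b = 0`. Applied to the Peirce components of `x` with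
respect to two idempotents, this gives `Δ(exf) = Δ(ex)f + eΔ(xf) - eΔ(x)f`. The identity extends
to linear combinations of idempotents, hence to rank-one operators, and passes from there to all
operators because the rank-one operators form a separating family stable under multiplication.
-/

namespace IsCDerivation

lemma mul_apply_mul_eq_zero {B : Type*} [NonUnitalNormedRing B] [NormedSpace ℂ B] {D : B → B}
    (hD : IsCDerivation D) {a x b : B} (hax : a * x = 0) (hxb : x * b = 0) :
    a * D x * b = 0 := by
  obtain ⟨-, hsmul, hmul⟩ := hD
  have hzero : D 0 = 0 := by simpa using hsmul 0 0
  have hleibniz : D a * x + a * D x = 0 := by rw [← hmul, hax, hzero]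
  rw [eq_neg_of_add_eq_zero_right hleibniz, neg_mul, mul_assoc, hxb, mul_zero, neg_zero]

lemma mul_apply_mul_eq_of_mul_mul_eq_smul {B : Type*} [NonUnitalNormedRing B] [NormedSpace ℂ B]
    {D : B → B} (hD : IsCDerivation D) {e x : B} {c : ℂ} (hex : e * x * e = c • e) :
    e * D x * e = c • D e - D e * x * e - e * x * D e := by
  obtain ⟨-, hsmul, hmul⟩ := hD
  have hleibniz := congrArg D hex
  rw [hmul, hmul, hsmul] at hleibniz
  rw [← hleibniz]
  noncomm_ring

protected lemma map_one {A : Type*} [NormedRing A] [NormedSpace ℂ A] {D : A → A}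
    (hD : IsCDerivation D) : D 1 = 0 := by
  simpa using hD.2.2 1 1

end IsCDerivation

namespace Is2LocalDerivation

variable {B : Type*} [NonUnitalNormedRing B] [NormedSpace ℂ B] {Δ : B → B}

protected lemma map_smul (hΔ : Is2LocalDerivation Δ) (c : ℂ) (x : B) : Δ (c • x) = c • Δ x := by
  obtain ⟨D, hD, hcx, hx⟩ := hΔ (c • x) x
  rw [hcx, hx, hD.2.1]

lemma mul_map_mul_eq_of_mul_mul_eq_smul (hΔ : Is2LocalDerivation Δ) {e x : B} {c : ℂ}
    (hex : e * x * e = c • e) :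
    e * Δ x * e = c • Δ e - Δ e * x * e - e * x * Δ e := by
  obtain ⟨D, hD, hx, he⟩ := hΔ x e
  rw [hx, he, hD.mul_apply_mul_eq_of_mul_mul_eq_smul hex]

lemma mul_map_add_mul (hΔ : Is2LocalDerivation Δ) {e : B}
    (he : ∀ x, ∃ c : ℂ, e * x * e = c • e) (x y : B) :
    e * Δ (x + y) * e = e * Δ x * e + e * Δ y * e := by
  obtain ⟨c, hx⟩ := he x
  obtain ⟨d, hy⟩ := he y
  have hxy : e * (x + y) * e = (c + d) • e := by rw [mul_add, add_mul, hx, hy, add_smul]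
  rw [hΔ.mul_map_mul_eq_of_mul_mul_eq_smul hx, hΔ.mul_map_mul_eq_of_mul_mul_eq_smul hy,
    hΔ.mul_map_mul_eq_of_mul_mul_eq_smul hxy, add_smul]
  noncomm_ring

end Is2LocalDerivation

/-- A linear map which at each point agrees with some derivation, in the sense of Kadison's local
derivations; no continuity is assumed. -/
def IsLocalDerivation {B : Type*} [NonUnitalNormedRing B] [NormedSpace ℂ B]
    (L : B →ₗ[ℂ] B) : Prop :=
  ∀ x, ∃ D : B → B, IsCDerivation D ∧ L x = D x

namespace IsLocalDerivation

lemma mul_apply_mul_eq_zero {B : Type*} [NonUnitalNormedRing B] [NormedSpace ℂ B]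
    {L : B →ₗ[ℂ] B} (hL : IsLocalDerivation L) {a x b : B} (hax : a * x = 0) (hxb : x * b = 0) :
    a * L x * b = 0 := by
  obtain ⟨D, hD, h⟩ := hL x
  rw [h, hD.mul_apply_mul_eq_zero hax hxb]

section Unital

variable {A : Type*} [NormedRing A] [NormedSpace ℂ A] {L : A →ₗ[ℂ] A}

protected lemma map_one (hL : IsLocalDerivation L) : L 1 = 0 := by
  obtain ⟨D, hD, h⟩ := hL 1
  rw [h, hD.map_one]

lemma map_mul_mul_of_isIdempotentElem (hL : IsLocalDerivation L) {e f : A}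
    (he : IsIdempotentElem e) (hf : IsIdempotentElem f) (x : A) :
    L (e * x * f) = L (e * x) * f + e * L (x * f) - e * L x * f := by
  have peirce {p q r s : A} (hpq : p * q = 0) (hrs : r * s = 0) : p * L (q * x * r) * s = 0 :=
    hL.mul_apply_mul_eq_zero (by simp only [← mul_assoc, hpq, zero_mul])
      (by simp only [mul_assoc, hrs, mul_zero])
  have h₁₁ := peirce he.one_sub_mul_self hf.mul_one_sub_self
  have h₂₁ := peirce he.mul_one_sub_self hf.mul_one_sub_self
  have h₁₂ := peirce he.one_sub_mul_self hf.one_sub_mul_self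
  have h₂₂ := peirce he.mul_one_sub_self hf.one_sub_mul_self
  simp only [sub_mul, mul_sub, one_mul, mul_one, map_sub] at h₁₁ h₂₁ h₁₂ h₂₂
  linear_combination (norm := noncomm_ring) h₁₁ - h₂₁ - h₁₂ + h₂₂

end Unital

variable {A : Type*} [NormedRing A] [NormedAlgebra ℂ A] {L : A →ₗ[ℂ] A}

lemma map_mul_mul_of_mem_span (hL : IsLocalDerivation L) {a b : A}
    (ha : a ∈ Submodule.span ℂ {e : A | IsIdempotentElem e})
    (hb : b ∈ Submodule.span ℂ {e : A | IsIdempotentElem e}) (x : A) :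
    L (a * x * b) = L (a * x) * b + a * L (x * b) - a * L x * b := by
  induction ha, hb using Submodule.span_induction₂ with
  | mem_mem e f he hf => exact hL.map_mul_mul_of_isIdempotentElem he hf x
  | zero_left b _ => simp
  | zero_right a _ => simp
  | add_left a₁ a₂ b _ _ _ h₁ h₂ =>
    simp only [add_mul, map_add, h₁, h₂]
    abel
  | add_right a b₁ b₂ _ _ _ h₁ h₂ =>
    simp only [mul_add, map_add, h₁, h₂]
    abel
  | smul_left c a b _ _ h => simp only [smul_mul_assoc, map_smul, h, smul_add, smul_sub]
  | smul_right c a b _ _ h => simp only [mul_smul_comm, map_smul, h, smul_add, smul_sub]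

lemma map_mul_of_mem_span (hL : IsLocalDerivation L) {a b : A}
    (ha : a ∈ Submodule.span ℂ {e : A | IsIdempotentElem e})
    (hb : b ∈ Submodule.span ℂ {e : A | IsIdempotentElem e}) :
    L (a * b) = L a * b + a * L b := by
  simpa [hL.map_one] using hL.map_mul_mul_of_mem_span ha hb 1

variable {I : Set A}

lemma map_mul_of_mem (hL : IsLocalDerivation L)
    (hspan : I ⊆ Submodule.span ℂ {e : A | IsIdempotentElem e})
    (hmul : ∀ a ∈ I, ∀ x, a * x ∈ I) (hsep : ∀ z, (∀ a ∈ I, a * z = 0) → z = 0)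
    (x : A) {b : A} (hb : b ∈ I) : L (x * b) = L x * b + x * L b := by
  refine sub_eq_zero.1 (hsep _ fun a ha => ?_)
  have htriple := hL.map_mul_mul_of_mem_span (hspan ha) (hspan hb) x
  have hprod := hL.map_mul_of_mem_span (hspan (hmul a ha x)) (hspan hb)
  linear_combination (norm := noncomm_ring) hprod - htriple

theorem isCDerivation (hL : IsLocalDerivation L)
    (hspan : I ⊆ Submodule.span ℂ {e : A | IsIdempotentElem e})
    (hmul_right : ∀ a ∈ I, ∀ x, a * x ∈ I) (hmul_left : ∀ b ∈ I, ∀ x, x * b ∈ I)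
    (hsep_left : ∀ z, (∀ a ∈ I, a * z = 0) → z = 0)
    (hsep_right : ∀ z, (∀ b ∈ I, z * b = 0) → z = 0) : IsCDerivation L := by
  refine ⟨map_add L, map_smul L, fun x y => sub_eq_zero.1 (hsep_right _ fun b hb => ?_)⟩
  have leibniz (z : A) {c : A} (hc : c ∈ I) : L (z * c) = L z * c + z * L c :=
    hL.map_mul_of_mem hspan hmul_right hsep_left z hc
  have hxy_b := leibniz (x * y) hb
  have hx_yb := leibniz x (hmul_left b hb y)
  rw [leibniz y hb, ← mul_assoc] at hx_yb
  linear_combination (norm := noncomm_ring) hx_yb - hxy_b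

end IsLocalDerivation

section RankOne

variable {R M : Type*} [CommSemiring R] [TopologicalSpace R] [AddCommMonoid M] [TopologicalSpace M]
  [Module R M] [ContinuousSMul R M]

lemma mul_smulRight (T : M →L[R] M) (f : M →L[R] R) (u : M) :
    T * f.smulRight u = f.smulRight (T u) := by
  ext v
  simp

lemma smulRight_mul (T : M →L[R] M) (f : M →L[R] R) (u : M) :
    f.smulRight u * T = (f ∘L T).smulRight u := by
  ext v
  simp

lemma smulRight_mul_mul_smulRight (T : M →L[R] M) (f : M →L[R] R) (u : M) :
    f.smulRight u * T * f.smulRight u = f (T u) • f.smulRight u := by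
  ext v
  simp [smul_smul, mul_comm]

lemma isIdempotentElem_smulRight {f : M →L[R] R} {u : M} (hfu : f u = 1) :
    IsIdempotentElem (f.smulRight u) := by
  rw [IsIdempotentElem, mul_smulRight, f.smulRight_apply, hfu, one_smul]

variable {𝕜 X : Type*} [Field 𝕜] [TopologicalSpace 𝕜] [AddCommGroup X] [TopologicalSpace X]
  [Module 𝕜 X] [ContinuousSMul 𝕜 X] [SeparatingDual 𝕜 X]

lemma eq_zero_of_smulRight_mul_mul_smulRight_eq_zero {T : X →L[𝕜] X}
    (hT : ∀ (f : X →L[𝕜] 𝕜) (u : X), f.smulRight u * T * f.smulRight u = 0) : T = 0 := by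
  ext u
  refine SeparatingDual.eq_zero_of_forall_dual_eq_zero (R := 𝕜) fun f => ?_
  have hfu : f (T u) • f (T u) • u = 0 := by
    simpa [smulRight_mul_mul_smulRight] using congr($(hT f u) (T u))
  rcases smul_eq_zero.1 hfu with h | h
  · exact h
  · rcases smul_eq_zero.1 h with h | rfl
    · exact h
    · simp

variable [IsTopologicalRing 𝕜] [IsTopologicalAddGroup X]

lemma smulRight_mem_span_isIdempotentElem (f : X →L[𝕜] 𝕜) (u : X) :
    f.smulRight u ∈ Submodule.span 𝕜 {e : X →L[𝕜] X | IsIdempotentElem e} := by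
  rcases eq_or_ne u 0 with rfl | hu
  · simp
  obtain ⟨g, hgu⟩ := SeparatingDual.exists_eq_one (R := 𝕜) hu
  have hh : (f + (1 - f u) • g) u = 1 := by simp [hgu]
  have hdecomp : f.smulRight u =
      (f + (1 - f u) • g).smulRight u - (1 - f u) • g.smulRight u := by
    ext v
    simp [add_smul, smul_smul]
  rw [hdecomp]
  exact sub_mem (Submodule.subset_span (isIdempotentElem_smulRight hh))
    (Submodule.smul_mem _ _ (Submodule.subset_span (isIdempotentElem_smulRight hgu)))

end RankOne

theorem Is2LocalDerivation.isCDerivation_continuousLinearMap {X : Type*}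
    [NormedAddCommGroup X] [NormedSpace ℂ X] {Δ : (X →L[ℂ] X) → (X →L[ℂ] X)}
    (hΔ : Is2LocalDerivation Δ) : IsCDerivation Δ := by
  have hadd (S T : X →L[ℂ] X) : Δ (S + T) = Δ S + Δ T := by
    refine sub_eq_zero.1 (eq_zero_of_smulRight_mul_mul_smulRight_eq_zero fun f u => ?_)
    rw [mul_sub, sub_mul, mul_add, add_mul, sub_eq_zero]
    exact hΔ.mul_map_add_mul (fun R => ⟨f (R u), smulRight_mul_mul_smulRight R f u⟩) S T
  let L : (X →L[ℂ] X) →ₗ[ℂ] (X →L[ℂ] X) := ⟨⟨Δ, hadd⟩, hΔ.map_smul⟩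
  have hL : IsLocalDerivation L := fun T =>
    let ⟨D, hD, hT, _⟩ := hΔ T T
    ⟨D, hD, hT⟩
  refine hL.isCDerivation (I := {T | ∃ (f : X →L[ℂ] ℂ) (u : X), T = f.smulRight u}) ?_ ?_ ?_ ?_ ?_
  · rintro _ ⟨f, u, rfl⟩
    exact smulRight_mem_span_isIdempotentElem f u
  · rintro _ ⟨f, u, rfl⟩ T
    exact ⟨_, _, smulRight_mul T f u⟩
  · rintro _ ⟨f, u, rfl⟩ T
    exact ⟨_, _, mul_smulRight T f u⟩
  · refine fun T hT => eq_zero_of_smulRight_mul_mul_smulRight_eq_zero fun f u => ?_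
    rw [hT _ ⟨f, u, rfl⟩, zero_mul]
  · refine fun T hT => eq_zero_of_smulRight_mul_mul_smulRight_eq_zero fun f u => ?_
    rw [mul_assoc, hT _ ⟨f, u, rfl⟩, mul_zero]

lemma norm_inv_sqrt_norm_smul {E : Type*} [SeminormedAddCommGroup E] [NormedSpace ℝ E] (x : E) :
    ‖(√‖x‖)⁻¹ • x‖ = √‖x‖ := by
  rw [norm_smul, norm_inv, Real.norm_of_nonneg (Real.sqrt_nonneg _), ← div_eq_inv_mul,
    Real.div_sqrt]

lemma continuous_inv_sqrt_norm_smul {E : Type*} [NormedAddCommGroup E] [NormedSpace ℝ E] :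
    Continuous fun x : E => (√‖x‖)⁻¹ • x := by
  refine continuous_iff_continuousAt.2 fun x => ?_
  rcases eq_or_ne x 0 with rfl | hx
  · rw [ContinuousAt, smul_zero, tendsto_zero_iff_norm_tendsto_zero]
    simp only [norm_inv_sqrt_norm_smul]
    exact (by fun_prop : Continuous fun y : E => √‖y‖).tendsto' 0 0 (by simp)
  · have hsqrt : √‖x‖ ≠ 0 := (Real.sqrt_pos.2 (norm_pos_iff.2 hx)).ne'
    exact ContinuousAt.smul (ContinuousAt.inv₀ (by fun_prop) hsqrt) continuousAt_id

section ContinuousMap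

variable {Ω : Type*} [TopologicalSpace Ω]

lemma exists_eq_mul_of_apply_eq_zero {A : Type*} [NormedRing A] [NormedAlgebra ℝ A]
    {a : C(Ω, A)} {t : Ω} (ha : a t = 0) : ∃ b c : C(Ω, A), a = b * c ∧ b t = 0 ∧ c t = 0 := by
  refine ⟨⟨fun s => √‖a s‖ • 1, by fun_prop⟩,
    ⟨fun s => (√‖a s‖)⁻¹ • a s, continuous_inv_sqrt_norm_smul.comp a.continuous⟩, ?_,
    by simp [ha], by simp [ha]⟩
  ext s
  rcases eq_or_ne (a s) 0 with h | h
  · simp [h]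
  · have hsqrt : √‖a s‖ ≠ 0 := (Real.sqrt_pos.2 (norm_pos_iff.2 h)).ne'
    simp [smul_smul, hsqrt]

variable [CompactSpace Ω] {A : Type*} [NormedRing A] [NormedAlgebra ℂ A]

namespace IsCDerivation

variable {D : C(Ω, A) → C(Ω, A)}

lemma apply_eq_zero (hD : IsCDerivation D) {a : C(Ω, A)} {t : Ω} (ha : a t = 0) :
    D a t = 0 := by
  obtain ⟨b, c, rfl, hb, hc⟩ := exists_eq_mul_of_apply_eq_zero ha
  simp [hD.2.2, hb, hc]

lemma apply_congr (hD : IsCDerivation D) {a b : C(Ω, A)} {t : Ω} (hab : a t = b t) :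
    D a t = D b t := by
  have hsub : D (a - b) t = 0 := hD.apply_eq_zero (by simp [hab])
  rw [← sub_add_cancel a b, hD.1, ContinuousMap.add_apply, hsub, zero_add]

lemma apply_const (hD : IsCDerivation D) (t : Ω) :
    IsCDerivation fun x : A => D (.const Ω x) t :=
  ⟨fun x y => congr($(hD.1 (.const Ω x) (.const Ω y)) t),
    fun c x => congr($(hD.2.1 c (.const Ω x)) t),
    fun x y => congr($(hD.2.2 (.const Ω x) (.const Ω y)) t)⟩

end IsCDerivation

namespace Is2LocalDerivation

variable {Δ : C(Ω, A) → C(Ω, A)}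

lemma apply_congr (hΔ : Is2LocalDerivation Δ) {a b : C(Ω, A)} {t : Ω} (hab : a t = b t) :
    Δ a t = Δ b t := by
  obtain ⟨D, hD, ha, hb⟩ := hΔ a b
  rw [ha, hb, hD.apply_congr hab]

lemma apply_const (hΔ : Is2LocalDerivation Δ) (t : Ω) :
    Is2LocalDerivation fun x : A => Δ (.const Ω x) t := fun x y =>
  let ⟨_, hD, hx, hy⟩ := hΔ (.const Ω x) (.const Ω y)
  ⟨_, hD.apply_const t, congr($hx t), congr($hy t)⟩

theorem isCDerivation_continuousMap
    (hA : ∀ δ : A → A, Is2LocalDerivation δ → IsCDerivation δ)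
    (hΔ : Is2LocalDerivation Δ) : IsCDerivation Δ := by
  have hfiber (a : C(Ω, A)) (t : Ω) : Δ a t = Δ (.const Ω (a t)) t := hΔ.apply_congr rfl
  have hderiv (t : Ω) := hA _ (hΔ.apply_const t)
  refine ⟨fun a b => ?_, fun c a => ?_, fun a b => ?_⟩ <;> ext t
  · rw [ContinuousMap.add_apply, hfiber, hfiber a, hfiber b]
    exact (hderiv t).1 (a t) (b t)
  · rw [ContinuousMap.smul_apply, hfiber, hfiber a]
    exact (hderiv t).2.1 c (a t)
  · rw [ContinuousMap.add_apply, ContinuousMap.mul_apply, ContinuousMap.mul_apply, hfiber,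
      hfiber a, hfiber b]
    exact (hderiv t).2.2 (a t) (b t)

end Is2LocalDerivation

end ContinuousMap

theorem stmt3_general {Ω X : Type*} [TopologicalSpace Ω] [CompactSpace Ω]
    [NormedAddCommGroup X] [NormedSpace ℂ X]
    (Δ : C(Ω, X →L[ℂ] X) → C(Ω, X →L[ℂ] X)) (hΔ : Is2LocalDerivation Δ) :
    IsCDerivation Δ :=
  hΔ.isCDerivation_continuousMap fun _ hδ => hδ.isCDerivation_continuousLinearMap

theorem stmt3 {Ω H : Type*} [TopologicalSpace Ω] [CompactSpace Ω] [T2Space Ω]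
    [NormedAddCommGroup H] [InnerProductSpace ℂ H] [CompleteSpace H]
    (Δ : C(Ω, H →L[ℂ] H) → C(Ω, H →L[ℂ] H)) (hΔ : Is2LocalDerivation Δ) :
    IsCDerivation Δ := by
  exact stmt3_general Δ hΔ
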